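/- (Edges join dual atoms) Let P be any named GS4 derivation with conclusion ⊢Γ. Then all edges in the branch-labeled axiom graph ⟨⟨P⟩⟩ link dual atom occurrences: for all edges xy ∈ E_{⟨⟨P⟩⟩}, Γ[x] = Γ[y]‾. -/

import Mathlib

open scoped Classical

noncomputable section

namespace GS4

/-- Named classical propositional formulas over atoms `α`, with names in `ℕ`. -/
inductive NForm (α : Type) : Type
  | atom : ℕ → α → NForm α
  | or   : NForm α → NForm α → NForm α
  | and  : NForm α → NForm α → NForm α

variable {α : Type}

/-- Name-preserving De Morgan negation, w.r.t. an involution `bar` on atoms. -/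
def negF (bar : α → α) : NForm α → NForm α
  | .atom x a => .atom x (bar a)
  | .or A B => .and (negF bar A) (negF bar B)
  | .and A B => .or (negF bar A) (negF bar B)

/-- The set of names occurring in a named formula. -/
def NForm.names : NForm α → Set ℕ
  | .atom x _ => {x}
  | .or A B => A.names ∪ B.names
  | .and A B => A.names ∪ B.names

/-- A named formula is sharing-free if every name occurs at most once in it. -/
def NForm.sharingFree : NForm α → Prop
  | .atom _ _ => True
  | .or A B => A.sharingFree ∧ B.sharingFree ∧ Disjoint A.names B.names
  | .and A B => A.sharingFree ∧ B.sharingFree ∧ Disjoint A.names B.names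

def NForm.isAtom : NForm α → Prop
  | .atom _ _ => True
  | _ => False

/-- Anonymous formulas (shapes): `A ≡ B` iff their shapes coincide. -/
inductive Shape (α : Type) : Type
  | atom : α → Shape α
  | or   : Shape α → Shape α → Shape α
  | and  : Shape α → Shape α → Shape α

def NForm.shape : NForm α → Shape α
  | .atom _ a => .atom a
  | .or A B => .or A.shape B.shape
  | .and A B => .and A.shape B.shape

/-- `HasAtom A x a`: the atomic formula `x:a` occurs in `A`. -/
def HasAtom : NForm α → ℕ → α → Prop
  | .atom y b, x, a => y = x ∧ b = a
  | .or A B, x, a => HasAtom A x a ∨ HasAtom B x a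
  | .and A B, x, a => HasAtom A x a ∨ HasAtom B x a

/-- Names of a finite set of named formulas. -/
def snames (Γ : Finset (NForm α)) : Set ℕ := ⋃ A ∈ Γ, A.names

/-- A finite set of named formulas is sharing-free if all its elements are
sharing-free with pairwise disjoint name sets. -/
def SFSet (Γ : Finset (NForm α)) : Prop :=
  (∀ A ∈ Γ, A.sharingFree) ∧
  ∀ A ∈ Γ, ∀ B ∈ Γ, A ≠ B → Disjoint A.names B.names

/-- `x:a` occurs in some formula of `Γ` (i.e. `Γ[x] = a` for sharing-free `Γ`). -/
def HasAtomS (Γ : Finset (NForm α)) (x : ℕ) (a : α) : Prop :=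
  ∃ A ∈ Γ, HasAtom A x a

/-- Branch sets of named formulas. -/
def BrF : NForm α → Set (Set ℕ)
  | .atom x _ => {{x}}
  | .or A B => {X | ∃ Y ∈ BrF A, ∃ Z ∈ BrF B, X = Y ∪ Z}
  | .and A B => BrF A ∪ BrF B

/-- Branch sets of sequents (finite sharing-free sets of named formulas). -/
def BrS (Γ : Finset (NForm α)) : Set (Set ℕ) :=
  {X | X ⊆ snames Γ ∧ ∀ A ∈ Γ, X ∩ A.names ∈ BrF A}

/-! ## Branch-labeled name graphs -/

/-- A branch-labeled name graph: vertices and a relation between unordered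
pairs of vertices and branch labels. -/
structure BLGraph : Type where
  verts : Set ℕ
  rel : Sym2 ℕ → Set ℕ → Prop

/-- Well-formedness of a bl-graph: related pairs consist of distinct vertices,
labels are sets of vertices, and each edge is included in its labels. -/
def BLGraph.IsBL (G : BLGraph) : Prop :=
  ∀ e X, G.rel e X → ¬ e.IsDiag ∧ X ⊆ G.verts ∧ ∀ v ∈ e, v ∈ X

def BLGraph.Edges (G : BLGraph) : Set (Sym2 ℕ) := {e | ∃ X, G.rel e X}

def BLGraph.Br (G : BLGraph) : Set (Set ℕ) := {X | ∃ e, G.rel e X}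

def BLGraph.union (G H : BLGraph) : BLGraph :=
  ⟨G.verts ∪ H.verts, fun e X => G.rel e X ∨ H.rel e X⟩

/-- Restriction `G↾_S` of a bl-graph. -/
def BLGraph.restrict (G : BLGraph) (S : Set ℕ) : BLGraph :=
  ⟨G.verts ∩ S, fun e X => G.rel e X ∧ X ⊆ S⟩

/-- The interface-relativized edge-branch relation `e ⊰^I_G X`. -/
def BLGraph.relI (G : BLGraph) (I : Set ℕ) (e : Sym2 ℕ) (X : Set ℕ) : Prop :=
  ∃ Y, G.rel e Y ∧ X = Y \ I

/-- `z 0, …, z (n-1)` is an `X`-labeled alternating path between `G` and `H`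
through the interface `I`. -/
def AltPath (G H : BLGraph) (I X : Set ℕ) (n : ℕ) (z : ℕ → ℕ) : Prop :=
  1 < n ∧
  (∀ i < n, ∀ j < n, z i = z j → i = j) ∧
  (∀ i, 0 < i → i + 1 < n → z i ∈ I) ∧
  ((∀ i, i + 1 < n →
      (Even i → G.relI I s(z i, z (i + 1)) X) ∧ (¬ Even i → H.relI I s(z i, z (i + 1)) X)) ∨
   (∀ i, i + 1 < n →
      (Even i → H.relI I s(z i, z (i + 1)) X) ∧ (¬ Even i → G.relI I s(z i, z (i + 1)) X)))

/-- Composition of bl-graphs over an interface `I`. -/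
def BLGraph.comp (G H : BLGraph) (I : Set ℕ) : BLGraph :=
  ⟨(G.verts ∪ H.verts) \ I,
   fun e X => ∃ n z, AltPath G H I X n z ∧ z 0 ∉ I ∧ z (n - 1) ∉ I ∧
     e = s(z 0, z (n - 1))⟩

/-- The weakening operator on bl-graphs: add vertices `V` and extend every
branch label by a member of `Brs`. -/
def blwk (V : Set ℕ) (Brs : Set (Set ℕ)) (G : BLGraph) : BLGraph :=
  ⟨G.verts ∪ V, fun e X => ∃ Y Z, G.rel e Y ∧ Z ∈ Brs ∧ X = Y ∪ Z⟩

/-- The bl-identity graph `id_{A,C}` on a pair of dual formulas. -/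
def blid : NForm α → NForm α → BLGraph
  | .atom x _, .atom y _ => ⟨{x, y}, fun e X => e = s(x, y) ∧ X = {x, y}⟩
  | .or A1 A2, .and C1 C2 =>
      (blwk A2.names (BrF A2) (blid A1 C1)).union (blwk A1.names (BrF A1) (blid A2 C2))
  | .and A1 A2, .or C1 C2 =>
      (blwk C2.names (BrF C2) (blid A1 C1)).union (blwk C1.names (BrF C1) (blid A2 C2))
  | _, _ => ⟨∅, fun _ _ => False⟩

/-! ## Simple name graphs -/

/-- A simple name graph. -/
structure NGraph : Type where
  verts : Set ℕ
  edges : Set (Sym2 ℕ)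

/-- Subgraph relation `H ⊑ G`. -/
def NGraph.Sub (H G : NGraph) : Prop := H.verts ⊆ G.verts ∧ H.edges ⊆ G.edges

def NGraph.union (G H : NGraph) : NGraph := ⟨G.verts ∪ H.verts, G.edges ∪ H.edges⟩

/-- Induced subgraph `G↾_S`. -/
def NGraph.restrict (G : NGraph) (S : Set ℕ) : NGraph :=
  ⟨G.verts ∩ S, {e ∈ G.edges | ∀ v ∈ e, v ∈ S}⟩

/-- Alternating paths between simple name graphs through an interface. -/
def NAltPath (G H : NGraph) (I : Set ℕ) (n : ℕ) (z : ℕ → ℕ) : Prop :=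
  0 < n ∧
  (∀ i < n, ∀ j < n, z i = z j → i = j) ∧
  (∀ i, 0 < i → i + 1 < n → z i ∈ I) ∧
  ((∀ i, i + 1 < n →
      (Even i → s(z i, z (i + 1)) ∈ G.edges) ∧ (¬ Even i → s(z i, z (i + 1)) ∈ H.edges)) ∨
   (∀ i, i + 1 < n →
      (Even i → s(z i, z (i + 1)) ∈ H.edges) ∧ (¬ Even i → s(z i, z (i + 1)) ∈ G.edges)))

/-- Composition of simple name graphs over an interface. -/
def NGraph.comp (G H : NGraph) (I : Set ℕ) : NGraph :=
  ⟨(G.verts ∪ H.verts) \ I,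
   {e | ∃ x y, x ≠ y ∧ x ∈ (G.verts ∪ H.verts) \ I ∧ y ∈ (G.verts ∪ H.verts) \ I ∧
        e = s(x, y) ∧ ∃ n z, NAltPath G H I n z ∧ z 0 = x ∧ z (n - 1) = y}⟩

/-- The identity graph `Id_{A,C}` on a pair of dual formulas. -/
def idg : NForm α → NForm α → NGraph
  | .atom x _, .atom y _ => ⟨{x, y}, {s(x, y)}⟩
  | .or A1 A2, .and C1 C2 => (idg A1 C1).union (idg A2 C2)
  | .and A1 A2, .or C1 C2 => (idg A1 C1).union (idg A2 C2)
  | _, _ => ⟨∅, ∅⟩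

/-- The edgeless (weakening) graph on the names of `Γ`. -/
def wkg (Γ : Finset (NForm α)) : NGraph := ⟨snames Γ, ∅⟩

/-! ## Named GS4 derivations -/

/-- Named GS4 derivation trees. -/
inductive Deriv (α : Type) : Type
  | ax (Γ : Finset (NForm α)) (A C : NForm α)
  | cut (A : NForm α) (P Q : Deriv α)
  | sup (P Q : Deriv α)
  | orI (A B : NForm α) (P : Deriv α)
  | andI (A B : NForm α) (P Q : Deriv α)

/-- Conclusion of a derivation tree. -/
def concl : Deriv α → Finset (NForm α)
  | .ax Γ A C => insert A (insert C Γ)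
  | .cut A P _ => (concl P).erase A
  | .sup P _ => concl P
  | .orI A B P => insert (NForm.or A B) (((concl P).erase A).erase B)
  | .andI A B P _ => insert (NForm.and A B) ((concl P).erase A)

/-- Well-formedness of derivation trees w.r.t. the atom involution `bar`:
each rule is applied correctly to sharing-free named sequents. -/
def WF (bar : α → α) : Deriv α → Prop
  | .ax Γ A C =>
      A.shape = (negF bar C).shape ∧
      A.sharingFree ∧ C.sharingFree ∧ SFSet Γ ∧
      Disjoint A.names C.names ∧
      Disjoint A.names (snames Γ) ∧ Disjoint C.names (snames Γ)
  | .cut A P Q =>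
      WF bar P ∧ WF bar Q ∧
      ∃ Γ : Finset (NForm α), A ∉ Γ ∧ negF bar A ∉ Γ ∧
        concl P = insert A Γ ∧ concl Q = insert (negF bar A) Γ ∧
        A.sharingFree ∧ SFSet Γ ∧ Disjoint A.names (snames Γ)
  | .sup P Q => WF bar P ∧ WF bar Q ∧ concl P = concl Q
  | .orI A B P =>
      WF bar P ∧
      ∃ Γ : Finset (NForm α), A ∉ Γ ∧ B ∉ Γ ∧ A ≠ B ∧
        concl P = insert A (insert B Γ) ∧
        A.sharingFree ∧ B.sharingFree ∧ SFSet Γ ∧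
        Disjoint A.names B.names ∧
        Disjoint A.names (snames Γ) ∧ Disjoint B.names (snames Γ)
  | .andI A B P Q =>
      WF bar P ∧ WF bar Q ∧
      ∃ Γ : Finset (NForm α), A ∉ Γ ∧ B ∉ Γ ∧
        concl P = insert A Γ ∧ concl Q = insert B Γ ∧
        A.sharingFree ∧ B.sharingFree ∧ SFSet Γ ∧
        Disjoint A.names B.names ∧
        Disjoint A.names (snames Γ) ∧ Disjoint B.names (snames Γ)

/-- A derivation is cut-free if it contains no cut rule. -/
def CutFree : Deriv α → Prop
  | .ax _ _ _ => True
  | .cut _ _ _ => False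
  | .sup P Q => CutFree P ∧ CutFree Q
  | .orI _ _ P => CutFree P
  | .andI _ _ P Q => CutFree P ∧ CutFree Q

/-- The branch-labeled axiom graph `⟨⟨P⟩⟩` of a derivation. -/
def blaxg : Deriv α → BLGraph
  | .ax Γ A C => blwk (snames Γ) (BrS Γ) (blid A C)
  | .cut A P Q => BLGraph.comp (blaxg P) (blaxg Q) A.names
  | .sup P Q => (blaxg P).union (blaxg Q)
  | .orI _ _ P => blaxg P
  | .andI _ _ P Q => (blaxg P).union (blaxg Q)

/-- The (simple) axiom graph `⟦P⟧` of a derivation. -/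
def axg : Deriv α → NGraph
  | .ax Γ A C => (wkg Γ).union (idg A C)
  | .cut A P Q => NGraph.comp (axg P) (axg Q) A.names
  | .sup P Q => (axg P).union (axg Q)
  | .orI _ _ P => axg P
  | .andI _ _ P Q => (axg P).union (axg Q)

/-! ## Inversion and isolation -/

/-- Inversion of a disjunction `D ∨ E` in the conclusion. -/
def inv (D E : NForm α) : Deriv α → Deriv α
  | .ax Γ A C =>
      if A = NForm.or D E then
        match C with
        | .and C1 C2 =>
            .andI C1 C2 (.ax (insert E Γ) D C1) (.ax (insert D Γ) E C2)
        | _ => .ax Γ A C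
      else if C = NForm.or D E then
        match A with
        | .and A1 A2 =>
            .andI A1 A2 (.ax (insert E Γ) A1 D) (.ax (insert D Γ) A2 E)
        | _ => .ax Γ A C
      else
        .ax (insert D (insert E (Γ.erase (NForm.or D E)))) A C
  | .cut A P Q => .cut A (inv D E P) (inv D E Q)
  | .sup P Q => .sup (inv D E P) (inv D E Q)
  | .orI A B P => if A = D ∧ B = E then P else .orI A B (inv D E P)
  | .andI A B P Q => .andI A B (inv D E P) (inv D E Q)

/-- Left inversion of a conjunction `D ∧ E` in the conclusion. -/
def invl (D E : NForm α) : Deriv α → Deriv α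
  | .ax Γ A C =>
      if A = NForm.and D E then
        match C with
        | .or C1 C2 => .orI C1 C2 (.ax (insert C2 Γ) D C1)
        | _ => .ax Γ A C
      else if C = NForm.and D E then
        match A with
        | .or A1 A2 => .orI A1 A2 (.ax (insert A2 Γ) A1 D)
        | _ => .ax Γ A C
      else
        .ax (insert D (Γ.erase (NForm.and D E))) A C
  | .cut A P Q => .cut A (invl D E P) (invl D E Q)
  | .sup P Q => .sup (invl D E P) (invl D E Q)
  | .orI A B P => .orI A B (invl D E P)
  | .andI A B P Q => if A = D ∧ B = E then P else .andI A B (invl D E P) (invl D E Q)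

/-- Right inversion of a conjunction `D ∧ E` in the conclusion. -/
def invr (D E : NForm α) : Deriv α → Deriv α
  | .ax Γ A C =>
      if A = NForm.and D E then
        match C with
        | .or C1 C2 => .orI C1 C2 (.ax (insert C1 Γ) E C2)
        | _ => .ax Γ A C
      else if C = NForm.and D E then
        match A with
        | .or A1 A2 => .orI A1 A2 (.ax (insert A1 Γ) A2 E)
        | _ => .ax Γ A C
      else
        .ax (insert E (Γ.erase (NForm.and D E))) A C
  | .cut A P Q => .cut A (invr D E P) (invr D E Q)
  | .sup P Q => .sup (invr D E P) (invr D E Q)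
  | .orI A B P => .orI A B (invr D E P)
  | .andI A B P Q => if A = D ∧ B = E then Q else .andI A B (invr D E P) (invr D E Q)

/-- Isolation of a non-atomic formula in the conclusion. -/
def isl : NForm α → Deriv α → Deriv α
  | .or A B, P => .orI A B (inv A B P)
  | .and A B, P => .andI A B (invl A B P) (invr A B P)
  | .atom _ _, P => P

/-- Totality of a bl-graph w.r.t. a sharing-free named sequent. -/
def Total (bar : α → α) (G : BLGraph) (Γ : Finset (NForm α)) : Prop :=
  G.verts = snames Γ ∧
  G.Br = BrS Γ ∧
  ∀ x y : ℕ, s(x, y) ∈ G.Edges →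
    ∀ a b : α, HasAtomS Γ x a → HasAtomS Γ y b → a = bar b

end GS4

/-!
Call `f : ℕ → α` a labeling of a sequent `Γ` if it extends `x ↦ Γ[x]`. By induction on the
derivation, the edges of `⟨⟨P⟩⟩` join dual labels under every labeling of the conclusion; a
labeling exists because the conclusion is sharing-free.

The only case with content is a cut on `A`. A labeling `f` of `Γ` and a labeling `l` of `A` glue to
a labeling of `Γ, A` that is `l` on the names of `A`, and to one of `Γ, Ā` that is `bar ∘ l` there.
Along an alternating path, traversing an edge dualizes the current label, and so does switching to
the other labeling at an interface vertex. Between the two ends of a path there is one more edge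
than there are switches, so the two end labels are dual.
-/

namespace GS4

variable {α : Type} {bar : α → α}

theorem names_negF (bar : α → α) (A : NForm α) : (negF bar A).names = A.names := by
  induction A with
  | atom => rfl
  | or A B ihA ihB | and A B ihA ihB => exact congrArg₂ (· ∪ ·) ihA ihB

theorem HasAtom.mem_names {A : NForm α} {x : ℕ} {a : α} (h : HasAtom A x a) : x ∈ A.names := by
  induction A with
  | atom => exact h.1.symm
  | or A B ihA ihB | and A B ihA ihB => exact h.imp ihA ihB

theorem names_subset_snames {Γ : Finset (NForm α)} {A : NForm α} (hA : A ∈ Γ) :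
    A.names ⊆ snames Γ :=
  Set.subset_biUnion_of_mem (u := NForm.names) hA

theorem snames_insert (A : NForm α) (Γ : Finset (NForm α)) :
    snames (insert A Γ) = A.names ∪ snames Γ :=
  Finset.set_biUnion_insert A Γ NForm.names

theorem SFSet.insert_of_disjoint {Γ : Finset (NForm α)} {A : NForm α} (hΓ : SFSet Γ)
    (hA : A.sharingFree) (hd : Disjoint A.names (snames Γ)) : SFSet (insert A Γ) := by
  have hdisj : ∀ B ∈ Γ, Disjoint A.names B.names :=
    fun B hB => hd.mono_right (names_subset_snames hB)
  refine ⟨Finset.forall_mem_insert .. |>.2 ⟨hA, hΓ.1⟩, ?_⟩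
  simp only [Finset.forall_mem_insert]
  exact ⟨⟨fun h => (h rfl).elim, fun B hB _ => hdisj B hB⟩,
    fun B hB => ⟨fun _ => (hdisj B hB).symm, hΓ.2 B hB⟩⟩

theorem SFSet.mono {Γ Δ : Finset (NForm α)} (hΔ : SFSet Δ) (h : Γ ⊆ Δ) : SFSet Γ :=
  ⟨fun A hA => hΔ.1 A (h hA), fun A hA B hB => hΔ.2 A (h hA) B (h hB)⟩

theorem SFSet.disjoint_names_snames {Γ : Finset (NForm α)} {A : NForm α}
    (h : SFSet (insert A Γ)) (hA : A ∉ Γ) : Disjoint A.names (snames Γ) :=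
  Set.disjoint_iUnion₂_right.2 fun B hB =>
    h.2 A (Finset.mem_insert_self A Γ) B (Finset.mem_insert_of_mem hB) fun hAB => hA (hAB ▸ hB)

section Conclusions

variable {A B : NForm α} {P Q : Deriv α} {Γ : Finset (NForm α)}

theorem concl_cut (hA : A ∉ Γ) (hP : concl P = insert A Γ) : concl (.cut A P Q) = Γ := by
  rw [concl, hP, Finset.erase_insert hA]

theorem concl_orI (hA : A ∉ Γ) (hB : B ∉ Γ) (hAB : A ≠ B)
    (hP : concl P = insert A (insert B Γ)) : concl (.orI A B P) = insert (.or A B) Γ := by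
  rw [concl, hP, Finset.erase_insert (by simp [hA, hAB]), Finset.erase_insert hB]

theorem concl_andI (hA : A ∉ Γ) (hP : concl P = insert A Γ) :
    concl (.andI A B P Q) = insert (.and A B) Γ := by
  rw [concl, hP, Finset.erase_insert hA]

end Conclusions

theorem WF.sfSet_concl {P : Deriv α} (hP : WF bar P) : SFSet (concl P) := by
  induction P with
  | ax Γ A C =>
    obtain ⟨-, hA, hC, hΓ, dAC, dA, dC⟩ := hP
    refine (hΓ.insert_of_disjoint hC dC).insert_of_disjoint hA ?_
    rw [snames_insert]
    exact dAC.union_right dA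
  | cut A P Q =>
    obtain ⟨-, -, Γ, hAΓ, -, hP, -, -, hΓ, -⟩ := hP
    rwa [concl_cut hAΓ hP]
  | sup P Q ihP => exact ihP hP.1
  | orI A B P =>
    obtain ⟨-, Γ, hAΓ, hBΓ, hAB, hP, hA, hB, hΓ, dAB, dA, dB⟩ := hP
    rw [concl_orI hAΓ hBΓ hAB hP]
    exact hΓ.insert_of_disjoint ⟨hA, hB, dAB⟩ (dA.union_left dB)
  | andI A B P Q =>
    obtain ⟨-, -, Γ, hAΓ, -, hP, -, hA, hB, hΓ, dAB, dA, dB⟩ := hP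
    rw [concl_andI hAΓ hP]
    exact hΓ.insert_of_disjoint ⟨hA, hB, dAB⟩ (dA.union_left dB)

/-- `f` is a labeling of the formula `A`: it sends each name of `A` to the atom that bears it.
Labelings are total functions, with arbitrary values outside `A.names`. -/
def LabelsF (f : ℕ → α) (A : NForm α) : Prop :=
  ∀ ⦃x a⦄, HasAtom A x a → f x = a

/-- `f` is a labeling of the sequent `Γ`: a total function extending `x ↦ Γ[x]`. -/
def LabelsS (f : ℕ → α) (Γ : Finset (NForm α)) : Prop :=
  ∀ A ∈ Γ, LabelsF f A

theorem labelsF_or {f : ℕ → α} {A B : NForm α} :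
    LabelsF f (.or A B) ↔ LabelsF f A ∧ LabelsF f B := by
  simp only [LabelsF, HasAtom, or_imp, forall_and]

theorem labelsF_and {f : ℕ → α} {A B : NForm α} :
    LabelsF f (.and A B) ↔ LabelsF f A ∧ LabelsF f B :=
  labelsF_or

theorem labelsS_insert {f : ℕ → α} {A : NForm α} {Γ : Finset (NForm α)} :
    LabelsS f (insert A Γ) ↔ LabelsF f A ∧ LabelsS f Γ :=
  Finset.forall_mem_insert ..

theorem LabelsS.eq_of_hasAtomS {f : ℕ → α} {Γ : Finset (NForm α)} (hf : LabelsS f Γ) {x : ℕ}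
    {a : α} (ha : HasAtomS Γ x a) : f x = a :=
  let ⟨A, hA, hx⟩ := ha
  hf A hA hx

theorem LabelsF.congr {f g : ℕ → α} {A : NForm α} (hf : LabelsF f A)
    (hfg : Set.EqOn g f A.names) : LabelsF g A :=
  fun _ _ h => (hfg h.mem_names).trans (hf h)

theorem LabelsF.negF {f : ℕ → α} {A : NForm α} (hf : LabelsF f A) :
    LabelsF (bar ∘ f) (negF bar A) := by
  induction A with
  | atom x a =>
    rintro _ _ ⟨rfl, rfl⟩
    exact congrArg bar (hf ⟨rfl, rfl⟩)
  | or A B ihA ihB | and A B ihA ihB =>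
    obtain ⟨hA, hB⟩ := labelsF_or.1 hf
    exact labelsF_or.2 ⟨ihA hA, ihB hB⟩

section Piecewise

variable {l f : ℕ → α} {A : NForm α}

theorem LabelsF.piecewise_left (hl : LabelsF l A) : LabelsF (A.names.piecewise l f) A :=
  hl.congr (Set.piecewise_eqOn _ _ _)

theorem LabelsF.piecewise_right {s : Set ℕ} (hf : LabelsF f A) (hd : Disjoint s A.names) :
    LabelsF (s.piecewise l f) A :=
  hf.congr fun _ hx => Set.piecewise_eq_of_notMem _ _ _ (hd.notMem_of_mem_right hx)

theorem LabelsS.piecewise_insert {Γ : Finset (NForm α)} (hf : LabelsS f Γ) (hl : LabelsF l A)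
    (hd : Disjoint A.names (snames Γ)) : LabelsS (A.names.piecewise l f) (insert A Γ) :=
  labelsS_insert.2 ⟨hl.piecewise_left, fun B hB =>
    (hf B hB).piecewise_right (hd.mono_right (names_subset_snames hB))⟩

end Piecewise

theorem exists_labelsF {A : NForm α} (hA : A.sharingFree) : ∃ f, LabelsF f A := by
  induction A with
  | atom x a => exact ⟨fun _ => a, fun _ _ h => h.2⟩
  | or A B ihA ihB | and A B ihA ihB =>
    obtain ⟨hA, hB, hd⟩ := hA
    obtain ⟨f, hf⟩ := ihA hA
    obtain ⟨g, hg⟩ := ihB hB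
    exact ⟨A.names.piecewise f g, labelsF_or.2 ⟨hf.piecewise_left, hg.piecewise_right hd⟩⟩

theorem SFSet.exists_labelsS [Nonempty α] {Γ : Finset (NForm α)} (hΓ : SFSet Γ) :
    ∃ f, LabelsS f Γ := by
  induction Γ using Finset.induction_on with
  | empty => exact ⟨fun _ => Classical.arbitrary α, by simp [LabelsS]⟩
  | insert A Γ hA ih =>
    obtain ⟨f, hf⟩ := ih (hΓ.mono (Finset.subset_insert A Γ))
    obtain ⟨l, hl⟩ := exists_labelsF (hΓ.1 A (Finset.mem_insert_self A Γ))
    exact ⟨_, hf.piecewise_insert hl (hΓ.disjoint_names_snames hA)⟩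

/-- The unordered pairs of names whose labels under `f` are dual; an edge set contained in it joins
dual labels only. The involution law `hbar` is an argument of the definition because it gives the
symmetry that `Sym2.fromRel` asks for. -/
def dualPairs (hbar : Function.Involutive bar) (f : ℕ → α) : Set (Sym2 ℕ) :=
  Sym2.fromRel (r := fun x y => f x = bar (f y)) ⟨fun _ _ h => hbar.eq_iff.1 h.symm⟩

theorem edges_union (G H : BLGraph) : (G.union H).Edges = G.Edges ∪ H.Edges :=
  Set.ext fun _ => exists_or

theorem edges_blwk_subset (V : Set ℕ) (𝓑 : Set (Set ℕ)) (G : BLGraph) :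
    (blwk V 𝓑 G).Edges ⊆ G.Edges :=
  fun _ ⟨_, Y, _, he, _⟩ => ⟨Y, he⟩

theorem edges_blid_subset_dualPairs (hbar : Function.Involutive bar) {f : ℕ → α} {A C : NForm α}
    (hAC : A.shape = (negF bar C).shape) (hA : LabelsF f A) (hC : LabelsF f C) :
    (blid A C).Edges ⊆ dualPairs hbar f := by
  fun_induction blid A C with
  | case1 x a y b =>
    rintro _ ⟨_, rfl, -⟩
    obtain rfl : a = bar b := Shape.atom.inj hAC
    exact (hA ⟨rfl, rfl⟩).trans (congrArg bar (hC ⟨rfl, rfl⟩)).symm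
  | case2 A₁ A₂ C₁ C₂ ih₁ ih₂ | case3 A₁ A₂ C₁ C₂ ih₁ ih₂ =>
    obtain ⟨hA₁, hA₂⟩ := labelsF_or.1 hA
    obtain ⟨hC₁, hC₂⟩ := labelsF_or.1 hC
    injection hAC with h₁ h₂
    rw [edges_union]
    exact Set.union_subset ((edges_blwk_subset ..).trans (ih₁ h₁ hA₁ hC₁))
      ((edges_blwk_subset ..).trans (ih₂ h₂ hA₂ hC₂))
  | case4 => exact fun _ ⟨_, he⟩ => he.elim

theorem eq_bar_of_chain {β ι : Type*} {bar : β → β} {z : ℕ → ι} {c : ℕ → ι → β} {m : ℕ}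
    (hedge : ∀ i ≤ m, c i (z i) = bar (c i (z (i + 1))))
    (hswitch : ∀ i < m, c (i + 1) (z (i + 1)) = bar (c i (z (i + 1)))) :
    c 0 (z 0) = bar (c m (z (m + 1))) := by
  induction m with
  | zero => exact hedge 0 le_rfl
  | succ m ih =>
    calc c 0 (z 0) = bar (c m (z (m + 1))) :=
          ih (fun i hi => hedge i (by lia)) (fun i hi => hswitch i (by lia))
      _ = c (m + 1) (z (m + 1)) := (hswitch m (by lia)).symm
      _ = bar (c (m + 1) (z (m + 2))) := hedge (m + 1) le_rfl

section Composition

variable {G H : BLGraph} {I : Set ℕ} {l f : ℕ → α}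

theorem label_eq_bar_label_of_alternating (hbar : Function.Involutive bar)
    (hG : G.Edges ⊆ dualPairs hbar (I.piecewise l f))
    (hH : H.Edges ⊆ dualPairs hbar (I.piecewise (bar ∘ l) f)) {X : Set ℕ} {n : ℕ} {z : ℕ → ℕ}
    (hn : 1 < n) (hinner : ∀ i, 0 < i → i + 1 < n → z i ∈ I)
    (hpath : ∀ i, i + 1 < n → (Even i → G.relI I s(z i, z (i + 1)) X) ∧
      (¬ Even i → H.relI I s(z i, z (i + 1)) X))
    (hfst : z 0 ∉ I) (hlst : z (n - 1) ∉ I) : f (z 0) = bar (f (z (n - 1))) := by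
  obtain ⟨m, rfl⟩ : ∃ m, n = m + 2 := Nat.exists_eq_add_of_le' hn
  -- The labeling in force along the `i`-th edge.
  let c (i : ℕ) : ℕ → α := I.piecewise (bar^[i] ∘ l) f
  have houter (i : ℕ) {x : ℕ} (hx : x ∉ I) : c i x = f x := Set.piecewise_eq_of_notMem _ _ _ hx
  have hedge (i : ℕ) (hi : i ≤ m) : c i (z i) = bar (c i (z (i + 1))) := by
    by_cases hi' : Even i
    · obtain ⟨Y, hY, -⟩ := (hpath i (by lia)).1 hi'
      simp only [c, hbar.iterate_even hi', Function.id_comp]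
      exact hG ⟨Y, hY⟩
    · obtain ⟨Y, hY, -⟩ := (hpath i (by lia)).2 hi'
      simp only [c, hbar.iterate_odd (Nat.not_even_iff_odd.1 hi')]
      exact hH ⟨Y, hY⟩
  have hswitch (i : ℕ) (hi : i < m) : c (i + 1) (z (i + 1)) = bar (c i (z (i + 1))) := by
    have hmem : z (i + 1) ∈ I := hinner (i + 1) i.succ_pos (by lia)
    simp only [c, Set.piecewise_eq_of_mem _ _ _ hmem, Function.comp_apply,
      Function.iterate_succ_apply']
  have hchain : c 0 (z 0) = bar (c m (z (m + 1))) := eq_bar_of_chain hedge hswitch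
  exact (houter 0 hfst).symm.trans (hchain.trans (congrArg bar (houter m hlst)))

theorem edges_comp_subset_dualPairs (hbar : Function.Involutive bar)
    (hG : G.Edges ⊆ dualPairs hbar (I.piecewise l f))
    (hH : H.Edges ⊆ dualPairs hbar (I.piecewise (bar ∘ l) f)) :
    (G.comp H I).Edges ⊆ dualPairs hbar f := by
  rintro _ ⟨X, n, z, ⟨hn, -, hinner, hpath | hpath⟩, hfst, hlst, rfl⟩
  · exact label_eq_bar_label_of_alternating hbar hG hH hn hinner hpath hfst hlst
  · have hG' : G.Edges ⊆ dualPairs hbar (I.piecewise (bar ∘ bar ∘ l) f) := by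
      rwa [← Function.comp_assoc, hbar.comp_self, Function.id_comp]
    exact label_eq_bar_label_of_alternating hbar hH hG' hn hinner hpath hfst hlst

end Composition

theorem edges_join_dual_atoms_general (hbar : Function.Involutive bar) {P : Deriv α}
    (hP : WF bar P) {f : ℕ → α} (hf : LabelsS f (concl P)) :
    (blaxg P).Edges ⊆ dualPairs hbar f := by
  induction P generalizing f with
  | ax Γ A C =>
    obtain ⟨hA, hf⟩ := labelsS_insert.1 hf
    exact (edges_blwk_subset ..).trans
      (edges_blid_subset_dualPairs hbar hP.1 hA (labelsS_insert.1 hf).1)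
  | cut A P Q ihP ihQ =>
    obtain ⟨wP, wQ, Γ, hAΓ, -, hP, hQ, hA, -, hd⟩ := hP
    rw [concl_cut hAΓ hP] at hf
    obtain ⟨l, hl⟩ := exists_labelsF hA
    have hfP : LabelsS (A.names.piecewise l f) (concl P) := hP ▸ hf.piecewise_insert hl hd
    have hfQ : LabelsS (A.names.piecewise (bar ∘ l) f) (concl Q) := by
      rw [← names_negF bar A] at hd ⊢
      exact hQ ▸ hf.piecewise_insert hl.negF hd
    exact edges_comp_subset_dualPairs hbar (ihP wP hfP) (ihQ wQ hfQ)
  | sup P Q ihP ihQ =>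
    obtain ⟨wP, wQ, hPQ⟩ := hP
    exact edges_union .. ▸ Set.union_subset (ihP wP hf) (ihQ wQ (hPQ ▸ hf))
  | orI A B P ihP =>
    obtain ⟨wP, Γ, hAΓ, hBΓ, hAB, hP, -⟩ := hP
    rw [concl_orI hAΓ hBΓ hAB hP, labelsS_insert, labelsF_or, and_assoc] at hf
    exact ihP wP (by rwa [hP, labelsS_insert, labelsS_insert])
  | andI A B P Q ihP ihQ =>
    obtain ⟨wP, wQ, Γ, hAΓ, -, hP, hQ, -⟩ := hP
    rw [concl_andI hAΓ hP, labelsS_insert, labelsF_and] at hf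
    obtain ⟨⟨hfA, hfB⟩, hfΓ⟩ := hf
    exact edges_union .. ▸ Set.union_subset (ihP wP (hP ▸ labelsS_insert.2 ⟨hfA, hfΓ⟩))
      (ihQ wQ (hQ ▸ labelsS_insert.2 ⟨hfB, hfΓ⟩))

end GS4

/-- all edges of the branch-labeled axiom graph of a derivation
link dual atom occurrences of its conclusion. -/
theorem GS4.edges_join_dual_atoms {α : Type} (bar : α → α)
    (hbar : Function.Involutive bar) (hfix : ∀ a, bar a ≠ a)
    (P : GS4.Deriv α) (hP : GS4.WF bar P) :
    ∀ x y : ℕ, s(x, y) ∈ (GS4.blaxg P).Edges →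
      ∀ a b : α, GS4.HasAtomS (GS4.concl P) x a →
        GS4.HasAtomS (GS4.concl P) y b → a = bar b := by
  intro x y he a b ha hb
  have : Nonempty α := ⟨a⟩
  obtain ⟨f, hf⟩ := hP.sfSet_concl.exists_labelsS
  have hxy : f x = bar (f y) := GS4.edges_join_dual_atoms_general hbar hP hf he
  rwa [hf.eq_of_hasAtomS ha, hf.eq_of_hasAtomS hb] at hxy
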